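/- Let S be a finite Boolean inverse monoid. Then the map θ : S → K(A(S)) defined by θ(a) = {x ∈ A(S) : x ≤ a} is an isomorphism of Boolean inverse monoids; in particular, every finite Boolean inverse monoid is isomorphic to the Boolean inverse monoid of all local bisections of the finite discrete groupoid of its atoms under the restricted product. -/

import Mathlib

namespace Paper

/-- An inverse semigroup with zero: an associative multiplication, a zero that is
absorbing, and a map `⁻¹` sending each element to its unique generalized inverse. -/
class IsInverseSemigroup (S : Type*) [Mul S] [Zero S] [Inv S] : Prop where
  mul_assoc : ∀ a b c : S, a * b * c = a * (b * c)
  mul_inv_mul : ∀ a : S, a * a⁻¹ * a = a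
  inv_mul_inv : ∀ a : S, a⁻¹ * a * a⁻¹ = a⁻¹
  inv_unique : ∀ a b : S, a * b * a = a → b * a * b = b → b = a⁻¹
  zero_mul : ∀ a : S, 0 * a = 0
  mul_zero : ∀ a : S, a * 0 = 0

variable {S : Type*} [Mul S] [Zero S] [Inv S]

/-- The natural partial order: `a ≤ b` iff `a = b * a⁻¹ * a`. -/
def nle (a b : S) : Prop := a = b * a⁻¹ * a

/-- `e` is an idempotent. -/
def idem (e : S) : Prop := e * e = e

/-- `a` and `b` are compatible. -/
def compat (a b : S) : Prop := idem (a⁻¹ * b) ∧ idem (a * b⁻¹)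

/-- `a` and `b` are orthogonal. -/
def orth (a b : S) : Prop := a⁻¹ * b = 0 ∧ a * b⁻¹ = 0

/-- `j` is the least upper bound of `a` and `b` for the natural partial order. -/
def isJoin (a b j : S) : Prop :=
  nle a j ∧ nle b j ∧ ∀ c : S, nle a c → nle b c → nle j c

/-- `m` is the greatest lower bound of `a` and `b` for the natural partial order. -/
def isMeet (a b m : S) : Prop :=
  nle m a ∧ nle m b ∧ ∀ c : S, nle c a → nle c b → nle c m

/-- `a` is an atom: a nonzero element with nothing strictly between it and `0`. -/
def isAtomElem (a : S) : Prop := a ≠ 0 ∧ ∀ x : S, nle x a → x = a ∨ x = 0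

/-- `s` is the least upper bound of the finite family `f`. -/
def isJoinFin {m : ℕ} (f : Fin m → S) (s : S) : Prop :=
  (∀ i, nle (f i) s) ∧ ∀ c : S, (∀ i, nle (f i) c) → nle s c

/-- A Boolean inverse semigroup: a nonzero inverse semigroup with zero in which
compatible pairs have joins, multiplication distributes over binary compatible joins,
and the idempotents form a generalized Boolean algebra under the natural partial
order (meets of idempotents are automatically given by multiplication; the extra
requirement is the existence of relative complements). -/
class IsBooleanInverseSemigroup (S : Type*) [Mul S] [Zero S] [Inv S]
    extends IsInverseSemigroup S : Prop where
  exists_ne_zero : ∃ a : S, a ≠ 0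
  compat_join : ∀ a b : S, compat a b → ∃ j, isJoin a b j
  mul_join : ∀ a b j c : S, isJoin a b j → isJoin (c * a) (c * b) (c * j)
  join_mul : ∀ a b j c : S, isJoin a b j → isJoin (a * c) (b * c) (j * c)
  relcomp : ∀ e f : S, idem e → idem f → nle f e →
    ∃ g : S, idem g ∧ nle g e ∧ g * f = 0 ∧ isJoin f g e


/-- `A` is a local bisection of the groupoid of atoms of `S` (under the restricted
product): a set of atoms in which elements with equal domains are equal and
elements with equal ranges are equal. -/
def lbAtoms {S : Type*} [Mul S] [Zero S] [Inv S] (A : Set S) : Prop :=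
  (∀ x ∈ A, isAtomElem x) ∧
    ∀ x ∈ A, ∀ y ∈ A, (x⁻¹ * x = y⁻¹ * y → x = y) ∧ (x * x⁻¹ = y * y⁻¹ → x = y)

/-- The setwise product of subsets of `S` with respect to the restricted product:
`x · y` is included when `d(x) = r(y)`. -/
def restrictedSetMul {S : Type*} [Mul S] [Inv S] (A B : Set S) : Set S :=
  {z | ∃ x ∈ A, ∃ y ∈ B, x⁻¹ * x = y * y⁻¹ ∧ z = x * y}

/-- The map sending an element to the set of atoms below it. -/
def theta {S : Type*} [Mul S] [Zero S] [Inv S] (a : S) : Set S :=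
  {x | isAtomElem x ∧ nle x a}

/-!
An atom below `a * b` factors as a restricted product of an atom below `a` and an atom
below `b`, which makes `θ` multiplicative in every inverse semigroup with zero. Splitting an atom
off an element by a relative complement exhibits every element, under the descending chain
condition, as a join of finitely many atoms; hence `θ` is injective. Conversely, distinct atoms of
a local bisection are orthogonal, so the atoms of a finite one have a join, and by distributivity
no further atoms lie below that join.
-/

theorem lbAtoms.mono {A B : Set S} (hB : lbAtoms B) (hAB : A ⊆ B) : lbAtoms A :=
  ⟨fun x hx => hB.1 x (hAB hx), fun x hx y hy => hB.2 x (hAB hx) y (hAB hy)⟩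

section InverseSemigroup

variable [IsInverseSemigroup S]

/-- The semigroup with zero underlying an inverse semigroup. It gives access to the library lemmas
about `*` and `0`; its operations are the given ones. -/
abbrev semigroupWithZero : SemigroupWithZero S where
  mul_assoc := IsInverseSemigroup.mul_assoc
  zero_mul := IsInverseSemigroup.zero_mul
  mul_zero := IsInverseSemigroup.mul_zero

attribute [local instance] semigroupWithZero

theorem mul_inv_mul_self (a : S) : a * (a⁻¹ * a) = a := by
  rw [← mul_assoc, IsInverseSemigroup.mul_inv_mul]

theorem inv_mul_inv_self (a : S) : a⁻¹ * (a * a⁻¹) = a⁻¹ := by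
  rw [← mul_assoc, IsInverseSemigroup.inv_mul_inv]

theorem mul_inv_mul_self_assoc (a c : S) : a * (a⁻¹ * (a * c)) = a * c := by
  rw [← mul_assoc a⁻¹, ← mul_assoc, mul_inv_mul_self]

theorem inv_mul_inv_self_assoc (a c : S) : a⁻¹ * (a * (a⁻¹ * c)) = a⁻¹ * c := by
  rw [← mul_assoc a, ← mul_assoc, inv_mul_inv_self]

/-- Inversion in an inverse semigroup is an involution; this gives access to the library lemma
`inv_inv`. -/
abbrev involutiveInv : InvolutiveInv S where
  inv_inv a := (IsInverseSemigroup.inv_unique a⁻¹ a (IsInverseSemigroup.inv_mul_inv a)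
    (IsInverseSemigroup.mul_inv_mul a)).symm

attribute [local instance] involutiveInv

theorem idem_zero : idem (0 : S) := zero_mul 0

theorem idem_inv_mul (a : S) : idem (a⁻¹ * a) := by
  rw [idem, mul_assoc, mul_inv_mul_self]

theorem idem_mul_inv (a : S) : idem (a * a⁻¹) := by
  rw [idem, mul_assoc, inv_mul_inv_self]

theorem idem.mul_mul_self {e : S} (he : idem e) (c : S) : e * (e * c) = e * c := by
  rw [← mul_assoc, he]

theorem idem.inv_eq {e : S} (he : idem e) : e⁻¹ = e :=
  (IsInverseSemigroup.inv_unique e e (by rw [he, he]) (by rw [he, he])).symm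

theorem inv_zero : (0 : S)⁻¹ = 0 := idem_zero.inv_eq

theorem idem.mul {e f : S} (he : idem e) (hf : idem f) : idem (e * f) := by
  set x := (e * f)⁻¹ with hx
  have mul_x_mul : e * f * x * (e * f) = e * f := IsInverseSemigroup.mul_inv_mul (e * f)
  have x_mul_x : x * (e * f) * x = x := IsInverseSemigroup.inv_mul_inv (e * f)
  have conj_x : f * x * e * (f * x * e) = f * x * e := by
    calc f * x * e * (f * x * e) = f * (x * (e * f) * x) * e := by simp only [mul_assoc]
      _ = f * x * e := by rw [x_mul_x]
  have x_eq : f * x * e = x := by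
    refine IsInverseSemigroup.inv_unique (e * f) (f * x * e) ?_ ?_
    · calc e * f * (f * x * e) * (e * f) = e * f * x * (e * f) := by
            simp only [mul_assoc, he.mul_mul_self, hf.mul_mul_self]
        _ = e * f := mul_x_mul
    · calc f * x * e * (e * f) * (f * x * e) = f * x * e * (f * x * e) := by
            simp only [mul_assoc, he.mul_mul_self, hf.mul_mul_self]
        _ = f * x * e := conj_x
  have idem_x : idem x := by rwa [x_eq] at conj_x
  rwa [← inv_inv (e * f), ← hx, idem_x.inv_eq]

theorem idem.mul_comm {e f : S} (he : idem e) (hf : idem f) : e * f = f * e := by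
  have mul_mul {e f : S} (he : idem e) (hf : idem f) :
      e * f * (f * e) * (e * f) = e * f := by
    calc e * f * (f * e) * (e * f) = e * f * (e * f) := by
          simp only [mul_assoc, he.mul_mul_self, hf.mul_mul_self]
      _ = e * f := he.mul hf
  rw [IsInverseSemigroup.inv_unique (e * f) (f * e) (mul_mul he hf) (mul_mul hf he),
    (he.mul hf).inv_eq]

theorem mul_inv_rev (a b : S) : (a * b)⁻¹ = b⁻¹ * a⁻¹ := by
  have comm : b * b⁻¹ * (a⁻¹ * a) = a⁻¹ * a * (b * b⁻¹) :=
    (idem_mul_inv b).mul_comm (idem_inv_mul a)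
  refine (IsInverseSemigroup.inv_unique _ _ ?_ ?_).symm
  · calc a * b * (b⁻¹ * a⁻¹) * (a * b) = a * (b * b⁻¹ * (a⁻¹ * a)) * b := by
          simp only [mul_assoc]
      _ = a * b := by
          simp only [comm, mul_assoc, mul_inv_mul_self_assoc, mul_inv_mul_self]
  · calc b⁻¹ * a⁻¹ * (a * b) * (b⁻¹ * a⁻¹) = b⁻¹ * (a⁻¹ * a * (b * b⁻¹)) * a⁻¹ := by
          simp only [mul_assoc]
      _ = b⁻¹ * a⁻¹ := by
          simp only [← comm, mul_assoc, inv_mul_inv_self_assoc, inv_mul_inv_self]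

theorem idem.conj {e : S} (he : idem e) (b : S) : idem (b * e * b⁻¹) := by
  calc b * e * b⁻¹ * (b * e * b⁻¹) = b * (e * (b⁻¹ * b)) * (e * b⁻¹) := by
        simp only [mul_assoc]
    _ = b * e * b⁻¹ := by
        simp only [he.mul_comm (idem_inv_mul b), mul_assoc, mul_inv_mul_self_assoc,
          he.mul_mul_self]

theorem nle.mul_inv_mul_eq {a b : S} (h : nle a b) : b * (a⁻¹ * a) = a := by
  rw [← mul_assoc]
  exact h.symm

theorem nle_iff_exists_mul_idem {a b : S} : nle a b ↔ ∃ e, idem e ∧ a = b * e := by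
  refine ⟨fun h => ⟨a⁻¹ * a, idem_inv_mul a, h.mul_inv_mul_eq.symm⟩, ?_⟩
  rintro ⟨e, he, rfl⟩
  calc b * e = b * (b⁻¹ * b) * (e * e) := by rw [mul_inv_mul_self, he]
    _ = b * (b⁻¹ * b * e) * e := by simp only [mul_assoc]
    _ = b * (e * (b⁻¹ * b)) * e := by rw [(idem_inv_mul b).mul_comm he]
    _ = b * (b * e)⁻¹ * (b * e) := by simp only [mul_inv_rev, he.inv_eq, mul_assoc]

theorem nle_iff_exists_idem_mul {a b : S} : nle a b ↔ ∃ e, idem e ∧ a = e * b := by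
  rw [nle_iff_exists_mul_idem]
  constructor
  · rintro ⟨e, he, rfl⟩
    refine ⟨b * e * b⁻¹, he.conj b, ?_⟩
    calc b * e = b * (b⁻¹ * b * e) := by simp only [mul_assoc, mul_inv_mul_self_assoc]
      _ = b * e * b⁻¹ * b := by rw [(idem_inv_mul b).mul_comm he]; simp only [mul_assoc]
  · rintro ⟨e, he, rfl⟩
    refine ⟨b⁻¹ * e * b, by simpa only [inv_inv] using he.conj b⁻¹, ?_⟩
    calc e * b = e * (b * b⁻¹) * b := by simp only [mul_assoc, mul_inv_mul_self]
      _ = b * (b⁻¹ * e * b) := by rw [he.mul_comm (idem_mul_inv b)]; simp only [mul_assoc]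

theorem idem.mul_nle_left {e : S} (he : idem e) (a : S) : nle (a * e) a :=
  nle_iff_exists_mul_idem.2 ⟨e, he, rfl⟩

theorem idem.mul_nle_right {e : S} (he : idem e) (a : S) : nle (e * a) a :=
  nle_iff_exists_idem_mul.2 ⟨e, he, rfl⟩

theorem nle.refl (a : S) : nle a a :=
  (IsInverseSemigroup.mul_inv_mul a).symm

theorem nle.trans {a b c : S} (hab : nle a b) (hbc : nle b c) : nle a c := by
  obtain ⟨e, he, rfl⟩ := nle_iff_exists_mul_idem.1 hab
  obtain ⟨f, hf, rfl⟩ := nle_iff_exists_mul_idem.1 hbc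
  rw [mul_assoc]
  exact (hf.mul he).mul_nle_left c

theorem nle.antisymm {a b : S} (hab : nle a b) (hba : nle b a) : a = b := by
  obtain ⟨e, he, a_eq⟩ := nle_iff_exists_mul_idem.1 hab
  obtain ⟨f, hf, b_eq⟩ := nle_iff_exists_mul_idem.1 hba
  have a_mul_e : a * e = a := by rw [a_eq, mul_assoc, he]
  calc a = a * f * e := by rw [← b_eq, ← a_eq]
    _ = a * e * f := by rw [mul_assoc, hf.mul_comm he, mul_assoc]
    _ = b := by rw [a_mul_e, ← b_eq]

/-- The natural partial order as an order structure, so that order-theoretic notions such as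
`WellFoundedLT S`, the descending chain condition, refer to `nle`. -/
abbrev naturalPartialOrder : PartialOrder S where
  le := nle
  le_refl := nle.refl
  le_trans _ _ _ := nle.trans
  le_antisymm _ _ := nle.antisymm

attribute [local instance] naturalPartialOrder

theorem nle.mul_left {a b : S} (h : nle a b) (c : S) : nle (c * a) (c * b) := by
  obtain ⟨e, he, rfl⟩ := nle_iff_exists_mul_idem.1 h
  rw [← mul_assoc]
  exact he.mul_nle_left (c * b)

theorem nle.mul_right {a b : S} (h : nle a b) (c : S) : nle (a * c) (b * c) := by
  obtain ⟨e, he, rfl⟩ := nle_iff_exists_idem_mul.1 h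
  rw [mul_assoc]
  exact he.mul_nle_right (b * c)

theorem nle.inv {a b : S} (h : nle a b) : nle a⁻¹ b⁻¹ := by
  obtain ⟨e, he, rfl⟩ := nle_iff_exists_mul_idem.1 h
  rw [mul_inv_rev, he.inv_eq]
  exact he.mul_nle_right b⁻¹

theorem nle.mul_inv_mul_eq_left {a b : S} (h : nle a b) : a * a⁻¹ * b = a := by
  simpa only [mul_inv_rev, inv_inv] using congrArg (·⁻¹) h.inv.mul_inv_mul_eq

theorem nle.mul_inv_mul_cancel {a b z : S} (h : nle z (a * b)) : a * (a⁻¹ * z) = z := by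
  rw [← h.mul_inv_mul_eq]
  simp only [mul_assoc, mul_inv_mul_self_assoc]

theorem zero_nle (a : S) : nle 0 a :=
  nle_iff_exists_mul_idem.2 ⟨0, idem_zero, (mul_zero a).symm⟩

theorem nle_zero_iff {a : S} : nle a 0 ↔ a = 0 :=
  ⟨fun h => h.antisymm (zero_nle a), fun h => h ▸ nle.refl a⟩

theorem orth.compat {a b : S} (h : orth a b) : compat a b := by
  rw [Paper.compat, h.1, h.2]
  exact ⟨idem_zero, idem_zero⟩

theorem isAtomElem.inv {x : S} (hx : isAtomElem x) : isAtomElem x⁻¹ := by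
  refine ⟨fun h => hx.1 ?_, fun y hy => ?_⟩
  · rw [← inv_inv x, h, inv_zero]
  · have hy' : nle y⁻¹ x := by simpa only [inv_inv] using hy.inv
    refine (hx.2 _ hy').imp (fun h => ?_) (fun h => ?_)
    · rw [← h, inv_inv]
    · rw [← inv_inv y, h, inv_zero]

theorem isAtomElem.mul_left {x c : S} (hx : isAtomElem x) (hc : c⁻¹ * (c * x) = x) :
    isAtomElem (c * x) := by
  refine ⟨fun h => hx.1 ?_, fun y hy => ?_⟩
  · rw [← hc, h, mul_zero]
  · have hy' : nle (c⁻¹ * y) x := by simpa only [hc] using hy.mul_left c⁻¹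
    refine (hx.2 _ hy').imp (fun h => ?_) (fun h => ?_)
    · rw [← h, hy.mul_inv_mul_cancel]
    · rw [← hy.mul_inv_mul_cancel, h, mul_zero]

theorem isAtomElem.mul_right {x c : S} (hx : isAtomElem x) (hc : x * c * c⁻¹ = x) :
    isAtomElem (x * c) := by
  have hc' : c⁻¹⁻¹ * (c⁻¹ * x⁻¹) = x⁻¹ := by
    simpa only [mul_inv_rev] using congrArg (·⁻¹) hc
  simpa only [mul_inv_rev, inv_inv] using (hx.inv.mul_left hc').inv

theorem isAtomElem.mul_inv {x : S} (hx : isAtomElem x) : isAtomElem (x * x⁻¹) :=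
  hx.mul_right (by rw [inv_inv, mul_assoc, mul_inv_mul_self])

theorem isAtomElem.inv_mul {x : S} (hx : isAtomElem x) : isAtomElem (x⁻¹ * x) := by
  simpa only [inv_inv] using hx.inv.mul_inv

theorem isAtomElem.mul_eq_zero_of_ne {e f : S} (hatom_e : isAtomElem e) (hatom_f : isAtomElem f)
    (he : idem e) (hf : idem f) (hne : e ≠ f) : e * f = 0 := by
  by_contra hef
  have mul_eq_left : e * f = e := (hatom_e.2 _ (hf.mul_nle_left e)).resolve_right hef
  have mul_eq_right : e * f = f := (hatom_f.2 _ (he.mul_nle_right f)).resolve_right hef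
  exact hne (mul_eq_left.symm.trans mul_eq_right)

theorem isAtomElem.mul_inv_eq_zero {x y : S} (hx : isAtomElem x) (hy : isAtomElem y)
    (hne : x⁻¹ * x ≠ y⁻¹ * y) : x * y⁻¹ = 0 := by
  calc x * y⁻¹ = x * (x⁻¹ * x * (y⁻¹ * y)) * y⁻¹ := by
        simp only [mul_assoc, mul_inv_mul_self_assoc, inv_mul_inv_self]
    _ = 0 := by
        rw [hx.inv_mul.mul_eq_zero_of_ne hy.inv_mul (idem_inv_mul x) (idem_inv_mul y) hne,
          mul_zero, zero_mul]

theorem lbAtoms.orth_of_ne {A : Set S} (hA : lbAtoms A) {x y : S} (hx : x ∈ A) (hy : y ∈ A)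
    (hne : x ≠ y) : orth x y := by
  have hx_atom := hA.1 x hx
  have hy_atom := hA.1 y hy
  refine ⟨?_, hx_atom.mul_inv_eq_zero hy_atom fun h => hne ((hA.2 x hx y hy).1 h)⟩
  have ranges_ne : x⁻¹⁻¹ * x⁻¹ ≠ y⁻¹⁻¹ * y⁻¹ := by
    simpa only [inv_inv] using fun h => hne ((hA.2 x hx y hy).2 h)
  simpa only [inv_inv] using hx_atom.inv.mul_inv_eq_zero hy_atom.inv ranges_ne

theorem theta_mono {a b : S} (h : nle a b) : theta a ⊆ theta b :=
  fun _ hx => ⟨hx.1, hx.2.trans h⟩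

theorem theta_zero : theta (0 : S) = ∅ :=
  Set.eq_empty_of_forall_notMem fun _ hx => hx.1.1 (nle_zero_iff.1 hx.2)

theorem isAtomElem.theta_eq {x : S} (hx : isAtomElem x) : theta x = {x} := by
  ext y
  refine ⟨fun hy => (hx.2 y hy.2).resolve_right hy.1.1, ?_⟩
  rintro rfl
  exact ⟨hx, nle.refl y⟩

theorem lbAtoms_theta (a : S) : lbAtoms (theta a) := by
  refine ⟨fun x hx => hx.1, fun x hx y hy => ⟨fun h => ?_, fun h => ?_⟩⟩
  · rw [← hx.2.mul_inv_mul_eq, h, hy.2.mul_inv_mul_eq]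
  · rw [← hx.2.mul_inv_mul_eq_left, h, hy.2.mul_inv_mul_eq_left]

theorem theta_mul_subset (a b : S) :
    theta (a * b) ⊆ restrictedSetMul (theta a) (theta b) := by
  rintro z ⟨hz, hle⟩
  have a_inv_mul : a * (a⁻¹ * z) = z := hle.mul_inv_mul_cancel
  have left_mem : z * z⁻¹ * a ∈ theta a := by
    refine ⟨hz.mul_inv.mul_right ?_, (idem_mul_inv z).mul_nle_right a⟩
    calc z * z⁻¹ * a * a⁻¹ = a * a⁻¹ * (z * z⁻¹) := by
          rw [mul_assoc, (idem_mul_inv z).mul_comm (idem_mul_inv a)]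
      _ = a * (a⁻¹ * z) * z⁻¹ := by simp only [mul_assoc]
      _ = z * z⁻¹ := by rw [a_inv_mul]
  have right_mem : a⁻¹ * z ∈ theta b := by
    refine ⟨hz.mul_left (by rw [inv_inv, a_inv_mul]), (hle.mul_left a⁻¹).trans ?_⟩
    rw [← mul_assoc]
    exact (idem_inv_mul a).mul_nle_right b
  refine ⟨_, left_mem, _, right_mem, ?_, ?_⟩
  · simp only [mul_inv_rev, inv_inv, mul_assoc, inv_mul_inv_self_assoc]
  · rw [mul_assoc, a_inv_mul, mul_assoc, mul_inv_mul_self]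

theorem theta_mul (a b : S) : theta (a * b) = restrictedSetMul (theta a) (theta b) := by
  refine (theta_mul_subset a b).antisymm ?_
  rintro _ ⟨x, hx, y, hy, hxy, rfl⟩
  refine ⟨hy.1.mul_left ?_, (hx.2.mul_right y).trans (hy.2.mul_left a)⟩
  rw [← mul_assoc, hxy, mul_assoc, mul_inv_mul_self]

theorem exists_isAtomElem_nle [WellFoundedLT S] {a : S} (ha : a ≠ 0) :
    ∃ x, isAtomElem x ∧ nle x a := by
  obtain ⟨x, ⟨hx, hxa⟩, hmin⟩ :=
    exists_minimal_of_wellFoundedLT (fun x : S => x ≠ 0 ∧ nle x a) ⟨a, ha, nle.refl a⟩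
  refine ⟨x, ⟨hx, fun y hy => or_iff_not_imp_right.2 fun hy0 => ?_⟩, hxa⟩
  exact hy.antisymm (hmin ⟨hy0, hy.trans hxa⟩ hy)

end InverseSemigroup

attribute [local instance] semigroupWithZero involutiveInv naturalPartialOrder

section BooleanInverseSemigroup

variable [IsBooleanInverseSemigroup S]

theorem eq_zero_of_isJoin_zero_zero {j : S} (h : isJoin 0 0 j) : j = 0 :=
  nle_zero_iff.1 (h.2.2 0 (nle.refl 0) (nle.refl 0))

theorem isJoin.orth {a b j c : S} (h : isJoin a b j) (hac : orth a c) (hbc : orth b c) :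
    orth j c := by
  have inv_mul_eq_zero {x : S} (hx : x⁻¹ * c = 0) : c⁻¹ * x = 0 := by
    simpa only [mul_inv_rev, inv_inv, inv_zero] using congrArg (·⁻¹) hx
  have left_join := IsBooleanInverseSemigroup.mul_join a b j c⁻¹ h
  have right_join := IsBooleanInverseSemigroup.join_mul a b j c⁻¹ h
  rw [inv_mul_eq_zero hac.1, inv_mul_eq_zero hbc.1] at left_join
  rw [hac.2, hbc.2] at right_join
  refine ⟨?_, eq_zero_of_isJoin_zero_zero right_join⟩
  simpa only [mul_inv_rev, inv_inv, inv_zero] using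
    congrArg (·⁻¹) (eq_zero_of_isJoin_zero_zero left_join)

theorem isJoin.theta_eq {a b j : S} (h : isJoin a b j) : theta j = theta a ∪ theta b := by
  refine Set.Subset.antisymm ?_ (Set.union_subset (theta_mono h.1) (theta_mono h.2.1))
  rintro z ⟨hz, hzj⟩
  have hjoin : isJoin (z * z⁻¹ * a) (z * z⁻¹ * b) z := by
    simpa only [hzj.mul_inv_mul_eq_left] using
      IsBooleanInverseSemigroup.mul_join a b j (z * z⁻¹) h
  have nle_of_eq {c : S} (hc : z * z⁻¹ * c = z) : nle z c :=
    nle_iff_exists_idem_mul.2 ⟨z * z⁻¹, idem_mul_inv z, hc.symm⟩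
  rcases hz.2 _ hjoin.1 with hza | hza
  · exact Or.inl ⟨hz, nle_of_eq hza⟩
  rcases hz.2 _ hjoin.2.1 with hzb | hzb
  · exact Or.inr ⟨hz, nle_of_eq hzb⟩
  rw [hza, hzb] at hjoin
  exact absurd (eq_zero_of_isJoin_zero_zero hjoin) hz.1

theorem exists_isJoin_mul_inv_eq_zero {x a : S} (h : nle x a) :
    ∃ y, isJoin x y a ∧ x * y⁻¹ = 0 := by
  have domain_nle : nle (x⁻¹ * x) (a⁻¹ * a) := (h.mul_left x⁻¹).trans (h.inv.mul_right a)
  obtain ⟨g, hg, -, hgx, hjoin⟩ := IsBooleanInverseSemigroup.relcomp (a⁻¹ * a) (x⁻¹ * x)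
    (idem_inv_mul a) (idem_inv_mul x) domain_nle
  refine ⟨a * g, ?_, ?_⟩
  · simpa only [h.mul_inv_mul_eq, mul_inv_mul_self] using
      IsBooleanInverseSemigroup.mul_join _ _ _ a hjoin
  · calc x * (a * g)⁻¹ = x * (x⁻¹ * x * g) * a⁻¹ := by
          simp only [mul_inv_rev, hg.inv_eq, mul_assoc, mul_inv_mul_self_assoc]
      _ = 0 := by rw [(idem_inv_mul x).mul_comm hg, hgx, mul_zero, zero_mul]

theorem induction_on_atom_join [WellFoundedLT S] {motive : S → Prop} (zero : motive 0)
    (join : ∀ x y a, isAtomElem x → isJoin x y a → motive y → motive a) (a : S) : motive a := by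
  induction a using WellFoundedLT.induction with
  | ind a ih =>
    rcases eq_or_ne a 0 with rfl | ha
    · exact zero
    obtain ⟨x, hx, hxa⟩ := exists_isAtomElem_nle ha
    obtain ⟨y, hjoin, hxy⟩ := exists_isJoin_mul_inv_eq_zero hxa
    have y_ne : y ≠ a := by
      rintro rfl
      refine hx.inv.1 ?_
      rw [← hxa.inv.mul_inv_mul_eq_left, inv_inv, mul_assoc, hxy, mul_zero]
    exact join x y a hx hjoin (ih y (lt_of_le_of_ne hjoin.2.1 y_ne))

theorem finite_theta [WellFoundedLT S] (a : S) : (theta a).Finite := by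
  induction a using induction_on_atom_join with
  | zero => rw [theta_zero]; exact Set.finite_empty
  | join x y a hx hjoin ih =>
    rw [hjoin.theta_eq, hx.theta_eq]
    exact (Set.finite_singleton x).union ih

theorem theta_subset_theta_iff [WellFoundedLT S] {a b : S} : theta a ⊆ theta b ↔ nle a b := by
  refine ⟨fun h => ?_, theta_mono⟩
  induction a using induction_on_atom_join with
  | zero => exact zero_nle b
  | join x y a hx hjoin ih =>
    exact hjoin.2.2 b (h ⟨hx, hjoin.1⟩).2 (ih ((theta_mono hjoin.2.1).trans h))

theorem theta_injective [WellFoundedLT S] : Function.Injective (theta : S → Set S) :=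
  fun _ _ h => (theta_subset_theta_iff.1 h.subset).antisymm (theta_subset_theta_iff.1 h.superset)

theorem exists_theta_eq_and_orth {A : Set S} (hfin : A.Finite) (hA : lbAtoms A) :
    ∃ a, theta a = A ∧ ∀ c, (∀ x ∈ A, orth x c) → orth a c := by
  induction A, hfin using Set.Finite.induction_on with
  | empty => exact ⟨0, theta_zero, fun c _ => ⟨by rw [inv_zero, zero_mul], zero_mul _⟩⟩
  | @insert x T hxT _ ih =>
    obtain ⟨b, hb, hb_orth⟩ := ih (hA.mono (Set.subset_insert x T))
    have hbx : orth b x := hb_orth x fun t ht =>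
      hA.orth_of_ne (Set.mem_insert_of_mem x ht) (Set.mem_insert x T)
        (ne_of_mem_of_not_mem ht hxT)
    obtain ⟨a, hjoin⟩ := IsBooleanInverseSemigroup.compat_join b x hbx.compat
    refine ⟨a, ?_, fun c hc => ?_⟩
    · rw [hjoin.theta_eq, hb, (hA.1 x (Set.mem_insert x T)).theta_eq, Set.union_singleton]
    · exact hjoin.orth (hb_orth c fun t ht => hc t (Set.mem_insert_of_mem x ht))
        (hc x (Set.mem_insert x T))

end BooleanInverseSemigroup

theorem finite_boolean_inverse_monoid_iso_Kfin_atoms_general (S : Type*)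
    [Mul S] [Zero S] [Inv S] [IsBooleanInverseSemigroup S] [WellFoundedLT S] :
    (∀ a : S, lbAtoms (theta a) ∧ (theta a).Finite) ∧
    (∀ a b : S, theta a = theta b → a = b) ∧
    (∀ A : Set S, lbAtoms A → A.Finite → ∃ a : S, theta a = A) ∧
    (∀ a b : S, theta (a * b) = restrictedSetMul (theta a) (theta b)) :=
  ⟨fun a => ⟨lbAtoms_theta a, finite_theta a⟩, fun _ _ h => theta_injective h,
    fun _ hA hfin => (exists_theta_eq_and_orth hfin hA).imp fun _ h => h.1, theta_mul⟩

/-- For a finite Boolean inverse monoid `S`, the map `θ : S → K(A(S))`,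
`θ(a) = {atoms x : x ≤ a}`, is an isomorphism onto the Boolean inverse monoid of
all local bisections of the groupoid of atoms of `S` under the restricted
product: it takes values in local bisections, is injective, is surjective onto the
local bisections, and turns multiplication into the setwise restricted product. -/
theorem finite_boolean_inverse_monoid_iso_Kfin_atoms (S : Type*)
    [Mul S] [Zero S] [Inv S] [One S] [IsBooleanInverseSemigroup S] [Finite S]
    (hone : ∀ a : S, 1 * a = a ∧ a * 1 = a) :
    (∀ a : S, lbAtoms (theta a)) ∧
    (∀ a b : S, theta a = theta b → a = b) ∧
    (∀ A : Set S, lbAtoms A → ∃ a : S, theta a = A) ∧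
    (∀ a b : S, theta (a * b) = restrictedSetMul (theta a) (theta b)) := by
  obtain ⟨hlb, hinj, hsurj, hmul⟩ := finite_boolean_inverse_monoid_iso_Kfin_atoms_general S
  exact ⟨fun a => (hlb a).1, hinj, fun A hA => hsurj A hA A.toFinite, hmul⟩

end Paper
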